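/- For every pair (i,j) ∈ Λ, the stated formulas define a left D-module structure on the 2-dimensional vector space V_{i,j} = k·e₁ ⊕ k·e₂, and V_{i,j} is a simple D-module. -/

import Mathlib

open scoped TensorProduct

/-- Generators of the Drinfeld double `D = D(K^cop)`. -/
inductive DGen : Type
  | a | b | c | d | x | g

open FreeAlgebra in
/-- The defining relations of the algebra `D = D(K^cop)`. -/
inductive DRel (𝕜 : Type) [Field 𝕜] (ξ ν : 𝕜) :
    FreeAlgebra 𝕜 DGen → FreeAlgebra 𝕜 DGen → Prop
  | ab : DRel 𝕜 ξ ν (ι 𝕜 DGen.a * ι 𝕜 DGen.b) (ξ • (ι 𝕜 DGen.b * ι 𝕜 DGen.a))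
  | ac : DRel 𝕜 ξ ν (ι 𝕜 DGen.a * ι 𝕜 DGen.c) (ξ • (ι 𝕜 DGen.c * ι 𝕜 DGen.a))
  | cb : DRel 𝕜 ξ ν (ι 𝕜 DGen.c * ι 𝕜 DGen.b) 0
  | bc : DRel 𝕜 ξ ν (ι 𝕜 DGen.b * ι 𝕜 DGen.c) 0
  | cd : DRel 𝕜 ξ ν (ι 𝕜 DGen.c * ι 𝕜 DGen.d) (ξ • (ι 𝕜 DGen.d * ι 𝕜 DGen.c))
  | bd : DRel 𝕜 ξ ν (ι 𝕜 DGen.b * ι 𝕜 DGen.d) (ξ • (ι 𝕜 DGen.d * ι 𝕜 DGen.b))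
  | adcomm : DRel 𝕜 ξ ν (ι 𝕜 DGen.a * ι 𝕜 DGen.d) (ι 𝕜 DGen.d * ι 𝕜 DGen.a)
  | adone : DRel 𝕜 ξ ν (ι 𝕜 DGen.a * ι 𝕜 DGen.d) 1
  | bsq : DRel 𝕜 ξ ν (ι 𝕜 DGen.b * ι 𝕜 DGen.b) 0
  | csq : DRel 𝕜 ξ ν (ι 𝕜 DGen.c * ι 𝕜 DGen.c) 0
  | aac : DRel 𝕜 ξ ν (ι 𝕜 DGen.a * ι 𝕜 DGen.a * ι 𝕜 DGen.c) (ι 𝕜 DGen.b)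
  | afour : DRel 𝕜 ξ ν (ι 𝕜 DGen.a ^ 4) 1
  | gfour : DRel 𝕜 ξ ν (ι 𝕜 DGen.g ^ 4) 1
  | xsq : DRel 𝕜 ξ ν (ι 𝕜 DGen.x * ι 𝕜 DGen.x) (ι 𝕜 DGen.g * ι 𝕜 DGen.g - 1)
  | gx : DRel 𝕜 ξ ν (ι 𝕜 DGen.g * ι 𝕜 DGen.x) (-(ι 𝕜 DGen.x * ι 𝕜 DGen.g))
  | ag : DRel 𝕜 ξ ν (ι 𝕜 DGen.a * ι 𝕜 DGen.g) (ι 𝕜 DGen.g * ι 𝕜 DGen.a)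
  | bg : DRel 𝕜 ξ ν (ι 𝕜 DGen.b * ι 𝕜 DGen.g) (-(ι 𝕜 DGen.g * ι 𝕜 DGen.b))
  | cg : DRel 𝕜 ξ ν (ι 𝕜 DGen.c * ι 𝕜 DGen.g) (-(ι 𝕜 DGen.g * ι 𝕜 DGen.c))
  | dg : DRel 𝕜 ξ ν (ι 𝕜 DGen.d * ι 𝕜 DGen.g) (ι 𝕜 DGen.g * ι 𝕜 DGen.d)
  | axr : DRel 𝕜 ξ ν (ι 𝕜 DGen.a * ι 𝕜 DGen.x)
      ((ν * ξ) • (ι 𝕜 DGen.b + ι 𝕜 DGen.g * ι 𝕜 DGen.c) - ξ • (ι 𝕜 DGen.x * ι 𝕜 DGen.a))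
  | bxr : DRel 𝕜 ξ ν (ι 𝕜 DGen.b * ι 𝕜 DGen.x)
      ((ν * ξ) • (ι 𝕜 DGen.a - ι 𝕜 DGen.g * ι 𝕜 DGen.d) + ξ • (ι 𝕜 DGen.x * ι 𝕜 DGen.b))
  | cxr : DRel 𝕜 ξ ν (ι 𝕜 DGen.c * ι 𝕜 DGen.x)
      ((ν * ξ) • (ι 𝕜 DGen.d - ι 𝕜 DGen.g * ι 𝕜 DGen.a) - ξ • (ι 𝕜 DGen.x * ι 𝕜 DGen.c))
  | dxr : DRel 𝕜 ξ ν (ι 𝕜 DGen.d * ι 𝕜 DGen.x)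
      ((ν * ξ) • (ι 𝕜 DGen.c + ι 𝕜 DGen.g * ι 𝕜 DGen.b) + ξ • (ι 𝕜 DGen.x * ι 𝕜 DGen.d))

/-- The Drinfeld double `D = D(K^cop)`, presented by generators and relations. -/
abbrev DAlg (𝕜 : Type) [Field 𝕜] (ξ ν : 𝕜) : Type := RingQuot (DRel 𝕜 ξ ν)

variable (𝕜 : Type) [Field 𝕜] (ξ ν : 𝕜)

/-- The generator `a` of `D`. -/
noncomputable def gA : DAlg 𝕜 ξ ν := RingQuot.mkAlgHom 𝕜 (DRel 𝕜 ξ ν) (FreeAlgebra.ι 𝕜 DGen.a)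
/-- The generator `b` of `D`. -/
noncomputable def gB : DAlg 𝕜 ξ ν := RingQuot.mkAlgHom 𝕜 (DRel 𝕜 ξ ν) (FreeAlgebra.ι 𝕜 DGen.b)
/-- The generator `c` of `D`. -/
noncomputable def gC : DAlg 𝕜 ξ ν := RingQuot.mkAlgHom 𝕜 (DRel 𝕜 ξ ν) (FreeAlgebra.ι 𝕜 DGen.c)
/-- The generator `d` of `D`. -/
noncomputable def gD : DAlg 𝕜 ξ ν := RingQuot.mkAlgHom 𝕜 (DRel 𝕜 ξ ν) (FreeAlgebra.ι 𝕜 DGen.d)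
/-- The generator `x` of `D`. -/
noncomputable def gX : DAlg 𝕜 ξ ν := RingQuot.mkAlgHom 𝕜 (DRel 𝕜 ξ ν) (FreeAlgebra.ι 𝕜 DGen.x)
/-- The generator `g` of `D`. -/
noncomputable def gG : DAlg 𝕜 ξ ν := RingQuot.mkAlgHom 𝕜 (DRel 𝕜 ξ ν) (FreeAlgebra.ι 𝕜 DGen.g)

variable {𝕜 ξ ν}
variable {V W : Type} [AddCommGroup V] [Module 𝕜 V] [AddCommGroup W] [Module 𝕜 W]

/-- A `𝕜`-subspace is invariant under a representation of `D`. -/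
def DInvariant (ρ : DAlg 𝕜 ξ ν →ₐ[𝕜] Module.End 𝕜 V) (U : Submodule 𝕜 V) : Prop :=
  ∀ z : DAlg 𝕜 ξ ν, ∀ w ∈ U, ρ z w ∈ U

/-- A representation of `D` is simple (the corresponding `D`-module is simple). -/
def DSimpleRep (ρ : DAlg 𝕜 ξ ν →ₐ[𝕜] Module.End 𝕜 V) : Prop :=
  Nontrivial V ∧ ∀ U : Submodule 𝕜 V, DInvariant ρ U → U = ⊥ ∨ U = ⊤

/-- A representation of `D` is indecomposable. -/
def DIndecRep (ρ : DAlg 𝕜 ξ ν →ₐ[𝕜] Module.End 𝕜 V) : Prop :=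
  Nontrivial V ∧ ∀ U₁ U₂ : Submodule 𝕜 V, DInvariant ρ U₁ → DInvariant ρ U₂ →
    IsCompl U₁ U₂ → U₁ = ⊥ ∨ U₂ = ⊥

/-- The vector `v` spans a copy of the character `χ^j` inside a representation of `D`:
the generators act on `v` by the scalars `χ^j(a) = ξ^j`, `χ^j(b) = χ^j(c) = χ^j(x) = 0`,
`χ^j(d) = ξ^{-j}`, `χ^j(g) = (-1)^j`. -/
def ChiOn (ρ : DAlg 𝕜 ξ ν →ₐ[𝕜] Module.End 𝕜 V) (j : ZMod 4) (v : V) : Prop :=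
  ρ (gA 𝕜 ξ ν) v = ξ ^ j.val • v ∧ ρ (gB 𝕜 ξ ν) v = 0 ∧ ρ (gC 𝕜 ξ ν) v = 0 ∧
  ρ (gD 𝕜 ξ ν) v = (ξ ^ j.val)⁻¹ • v ∧ ρ (gX 𝕜 ξ ν) v = 0 ∧
  ρ (gG 𝕜 ξ ν) v = (-1 : 𝕜) ^ j.val • v

/-- The pair `(e₁, e₂)` realizes the defining action of the module `V_{i,j}`. -/
def VijOn (ρ : DAlg 𝕜 ξ ν →ₐ[𝕜] Module.End 𝕜 V) (i j : ZMod 4) (e₁ e₂ : V) : Prop :=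
  ρ (gA 𝕜 ξ ν) e₁ = ξ ^ i.val • e₁ ∧ ρ (gA 𝕜 ξ ν) e₂ = ξ ^ (i.val + 3) • e₂ ∧
  ρ (gB 𝕜 ξ ν) e₁ = 0 ∧ ρ (gB 𝕜 ξ ν) e₂ = (-1 : 𝕜) ^ i.val • e₁ ∧
  ρ (gC 𝕜 ξ ν) e₁ = 0 ∧ ρ (gC 𝕜 ξ ν) e₂ = e₁ ∧
  ρ (gD 𝕜 ξ ν) e₁ = (ξ ^ i.val)⁻¹ • e₁ ∧ ρ (gD 𝕜 ξ ν) e₂ = (ξ * (ξ ^ i.val)⁻¹) • e₂ ∧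
  ρ (gG 𝕜 ξ ν) e₁ = ξ ^ j.val • e₁ ∧ ρ (gG 𝕜 ξ ν) e₂ = ξ ^ (j.val + 2) • e₂ ∧
  ρ (gX 𝕜 ξ ν) e₁ = (ν * ξ * (ξ ^ (3 * i.val) - ξ ^ (i.val + j.val))) • e₂ ∧
  ρ (gX 𝕜 ξ ν) e₂ = (ν * ξ / 2 * (ξ ^ i.val + ξ ^ (3 * i.val + j.val))) • e₁

/-- The tuple `p` realizes the defining action of the module `P(ℓ) = P ⊗ k_{χ^ℓ}`
(`P = P(0)` being the projective cover of the trivial module). -/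
def POn (ρ : DAlg 𝕜 ξ ν →ₐ[𝕜] Module.End 𝕜 V) (ℓ : ZMod 4) (p : Fin 4 → V) : Prop :=
  ρ (gA 𝕜 ξ ν) (p 0) = ξ ^ ℓ.val • p 0 ∧ ρ (gA 𝕜 ξ ν) (p 1) = -(ξ ^ (ℓ.val + 1)) • p 1 ∧
  ρ (gA 𝕜 ξ ν) (p 2) = ξ ^ (ℓ.val + 1) • p 2 ∧ ρ (gA 𝕜 ξ ν) (p 3) = ξ ^ ℓ.val • p 3 ∧
  ρ (gB 𝕜 ξ ν) (p 0) = ξ ^ ℓ.val • p 2 ∧ ρ (gB 𝕜 ξ ν) (p 1) = ξ ^ (ℓ.val + 1) • p 3 ∧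
  ρ (gB 𝕜 ξ ν) (p 2) = 0 ∧ ρ (gB 𝕜 ξ ν) (p 3) = 0 ∧
  ρ (gC 𝕜 ξ ν) (p 0) = -((ξ ^ ℓ.val)⁻¹) • p 2 ∧
  ρ (gC 𝕜 ξ ν) (p 1) = (ξ * (ξ ^ ℓ.val)⁻¹) • p 3 ∧
  ρ (gC 𝕜 ξ ν) (p 2) = 0 ∧ ρ (gC 𝕜 ξ ν) (p 3) = 0 ∧
  ρ (gD 𝕜 ξ ν) (p 0) = (ξ ^ ℓ.val)⁻¹ • p 0 ∧
  ρ (gD 𝕜 ξ ν) (p 1) = (ξ * (ξ ^ ℓ.val)⁻¹) • p 1 ∧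
  ρ (gD 𝕜 ξ ν) (p 2) = -(ξ * (ξ ^ ℓ.val)⁻¹) • p 2 ∧
  ρ (gD 𝕜 ξ ν) (p 3) = (ξ ^ ℓ.val)⁻¹ • p 3 ∧
  ρ (gX 𝕜 ξ ν) (p 0) = p 1 + ν • p 2 ∧ ρ (gX 𝕜 ξ ν) (p 1) = -(ν • p 3) ∧
  ρ (gX 𝕜 ξ ν) (p 2) = p 3 ∧ ρ (gX 𝕜 ξ ν) (p 3) = 0 ∧
  ρ (gG 𝕜 ξ ν) (p 0) = (-1 : 𝕜) ^ ℓ.val • p 0 ∧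
  ρ (gG 𝕜 ξ ν) (p 1) = -((-1 : 𝕜) ^ ℓ.val) • p 1 ∧
  ρ (gG 𝕜 ξ ν) (p 2) = -((-1 : 𝕜) ^ ℓ.val) • p 2 ∧
  ρ (gG 𝕜 ξ ν) (p 3) = (-1 : 𝕜) ^ ℓ.val • p 3

/-- `ρT` is the tensor product representation of `ρM` and `ρN` on `M ⊗ N`, where the action
of `D` on a tensor product is given through the coproduct of the Drinfeld double:
`a ↦ a⊗a + c⊗b`, `b ↦ b⊗a + d⊗b`, `c ↦ a⊗c + c⊗d`, `d ↦ b⊗c + d⊗d`, `g ↦ g⊗g`,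
`x ↦ x⊗1 + g⊗x`. -/
def TensorRepOn (ρM : DAlg 𝕜 ξ ν →ₐ[𝕜] Module.End 𝕜 V) (ρN : DAlg 𝕜 ξ ν →ₐ[𝕜] Module.End 𝕜 W)
    (ρT : DAlg 𝕜 ξ ν →ₐ[𝕜] Module.End 𝕜 (V ⊗[𝕜] W)) : Prop :=
  ρT (gA 𝕜 ξ ν) = TensorProduct.map (ρM (gA 𝕜 ξ ν)) (ρN (gA 𝕜 ξ ν)) +
      TensorProduct.map (ρM (gC 𝕜 ξ ν)) (ρN (gB 𝕜 ξ ν)) ∧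
  ρT (gB 𝕜 ξ ν) = TensorProduct.map (ρM (gB 𝕜 ξ ν)) (ρN (gA 𝕜 ξ ν)) +
      TensorProduct.map (ρM (gD 𝕜 ξ ν)) (ρN (gB 𝕜 ξ ν)) ∧
  ρT (gC 𝕜 ξ ν) = TensorProduct.map (ρM (gA 𝕜 ξ ν)) (ρN (gC 𝕜 ξ ν)) +
      TensorProduct.map (ρM (gC 𝕜 ξ ν)) (ρN (gD 𝕜 ξ ν)) ∧
  ρT (gD 𝕜 ξ ν) = TensorProduct.map (ρM (gB 𝕜 ξ ν)) (ρN (gC 𝕜 ξ ν)) +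
      TensorProduct.map (ρM (gD 𝕜 ξ ν)) (ρN (gD 𝕜 ξ ν)) ∧
  ρT (gG 𝕜 ξ ν) = TensorProduct.map (ρM (gG 𝕜 ξ ν)) (ρN (gG 𝕜 ξ ν)) ∧
  ρT (gX 𝕜 ξ ν) = TensorProduct.map (ρM (gX 𝕜 ξ ν)) LinearMap.id +
      TensorProduct.map (ρM (gG 𝕜 ξ ν)) (ρN (gX 𝕜 ξ ν))


/-! The relations of `c` and `a` with `x` force the two off-diagonal entries `β` and `δ` of `x`, and
the relations of `b` and `d` with `x` then follow from `α⁴ = 1`; only `x² = g² - 1` uses `ν² = 2`.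
For simplicity, `c` maps every vector outside `𝕜e₁` to a nonzero multiple of `e₁`, and `x` maps `e₁`
to a multiple of `e₂` which is nonzero exactly because `ξ ^ (2i) ≠ ξ ^ j`. -/

open Submodule (span)

theorem pow_eq_pow_iff_natCast_zmod_eq {M : Type*} [CommMonoid M] {ζ : M} {n : ℕ} [NeZero n]
    (hζ : IsPrimitiveRoot ζ n) {k l : ℕ} : ζ ^ k = ζ ^ l ↔ (k : ZMod n) = l := by
  lift ζ to Mˣ using hζ.isUnit (NeZero.ne n)
  rw [← Units.val_pow_eq_pow_val, ← Units.val_pow_eq_pow_val, Units.val_inj, pow_eq_pow_iff_modEq,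
    ← (IsPrimitiveRoot.coe_units_iff.1 hζ).eq_orderOf, ZMod.natCast_eq_natCast_iff]

theorem sq_eq_neg_one_of_isPrimitiveRoot_four {R : Type*} [CommRing R] [NoZeroDivisors R] {ζ : R}
    (hζ : IsPrimitiveRoot ζ 4) : ζ ^ 2 = -1 :=
  (hζ.pow (by norm_num) (by norm_num : 4 = 2 * 2)).eq_neg_one_of_two_right

theorem two_ne_zero_of_isPrimitiveRoot_four {R : Type*} [CommRing R] [NoZeroDivisors R] {ζ : R}
    (hζ : IsPrimitiveRoot ζ 4) : (2 : R) ≠ 0 := by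
  intro h2
  refine hζ.pow_ne_one_of_pos_of_lt two_ne_zero (by norm_num) ?_
  linear_combination sq_eq_neg_one_of_isPrimitiveRoot_four hζ - h2

theorem eq_bot_or_eq_top_of_lower_raise {K M : Type*} [DivisionRing K] [AddCommGroup M]
    [Module K M] {e₁ e₂ : M} (hspan : span K {e₁, e₂} = ⊤) {S T : Module.End K M}
    (hS₁ : S e₁ = 0) (hS₂ : S e₂ = e₁) {t : K} (ht : t ≠ 0) (hT : T e₁ = t • e₂)
    {U : Submodule K M} (hUS : U ∈ S.invtSubmodule) (hUT : U ∈ T.invtSubmodule) :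
    U = ⊥ ∨ U = ⊤ := by
  refine or_iff_not_imp_left.2 fun hU ↦ ?_
  obtain ⟨w, hw, hw0⟩ := U.ne_bot_iff.1 hU
  obtain ⟨p, q, rfl⟩ := Submodule.mem_span_pair.1 (hspan ▸ Submodule.mem_top : w ∈ span K {e₁, e₂})
  have he₁ : e₁ ∈ U := by
    rcases eq_or_ne q 0 with rfl | hq
    · have hp : p ≠ 0 := by rintro rfl; simp at hw0
      simpa [U.smul_mem_iff hp] using hw
    · have : q • e₁ ∈ U := by simpa [hS₁, hS₂] using hUS hw
      exact (U.smul_mem_iff hq).1 this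
  have he₂ : e₂ ∈ U := (U.smul_mem_iff ht).1 (hT ▸ hUT he₁)
  rw [eq_top_iff, ← hspan, Submodule.span_le]
  exact Set.pair_subset he₁ he₂

theorem VijOn.dSimpleRep [Nontrivial V] {ρ : DAlg 𝕜 ξ ν →ₐ[𝕜] Module.End 𝕜 V} {i j : ZMod 4}
    {e₁ e₂ : V} (h : VijOn ρ i j e₁ e₂) (hspan : span 𝕜 {e₁, e₂} = ⊤)
    (hξ : IsPrimitiveRoot ξ 4) (hν : ν ≠ 0) (hij : 2 * i ≠ j) : DSimpleRep ρ := by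
  obtain ⟨-, -, -, -, hc₁, hc₂, -, -, -, -, hx₁, -⟩ := h
  have hpow : ξ ^ (3 * i.val) ≠ ξ ^ (i.val + j.val) := by
    rw [Ne, pow_eq_pow_iff_natCast_zmod_eq hξ]
    push_cast [ZMod.natCast_zmod_val]
    exact fun h3 ↦ hij (by linear_combination h3)
  have hx : ν * ξ * (ξ ^ (3 * i.val) - ξ ^ (i.val + j.val)) ≠ 0 :=
    mul_ne_zero (mul_ne_zero hν (hξ.ne_zero four_ne_zero)) (sub_ne_zero.2 hpow)
  exact ⟨inferInstance, fun U hU ↦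
    eq_bot_or_eq_top_of_lower_raise hspan hc₁ hc₂ hx hx₁ (hU (gC 𝕜 ξ ν)) (hU (gX 𝕜 ξ ν))⟩

/-- The matrices of the generators of `D` on a two-dimensional module of the shape of `V_{i,j}`,
with `α` and `γ` in place of `ξ ^ i` and `ξ ^ j`, and with unspecified off-diagonal entries `β`
and `δ` for `x`. -/
def vijMatrix (ξ α γ β δ : 𝕜) : DGen → Matrix (Fin 2) (Fin 2) 𝕜
  | .a => !![α, 0; 0, -(ξ * α)]
  | .b => !![0, α ^ 2; 0, 0]
  | .c => !![0, 1; 0, 0]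
  | .d => !![α⁻¹, 0; 0, ξ * α⁻¹]
  | .g => !![γ, 0; 0, -γ]
  | .x => !![0, β; δ, 0]

theorem lift_vijMatrix_eq_of_dRel {α γ β δ : 𝕜} (hξ : ξ ^ 2 = -1) (hα : α ^ 4 = 1) (hγ : γ ^ 4 = 1)
    (hβ : 2 * (α * β) = ν * ξ * (α ^ 2 + γ)) (hδ : δ = ν * ξ * (α ^ 3 - α * γ))
    (hβδ : β * δ = γ ^ 2 - 1) {y z : FreeAlgebra 𝕜 DGen} (h : DRel 𝕜 ξ ν y z) :
    FreeAlgebra.lift 𝕜 (vijMatrix ξ α γ β δ) y = FreeAlgebra.lift 𝕜 (vijMatrix ξ α γ β δ) z := by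
  have hα_inv : α⁻¹ = α ^ 3 := inv_eq_of_mul_eq_one_right (by rw [← pow_succ', hα])
  have hbδ : α ^ 2 * δ = ν * ξ * (α - γ * α⁻¹) := by
    rw [hδ, hα_inv]
    linear_combination ν * ξ * α * hα
  have hdβ : 2 * (α⁻¹ * β) = ν * ξ * (1 + γ * α ^ 2) := by
    rw [hα_inv]
    linear_combination α ^ 2 * hβ + ν * ξ * hα
  cases h <;>
    simp only [map_mul, map_smul, map_add, map_sub, map_neg, map_one, map_zero,
      FreeAlgebra.lift_ι_apply, vijMatrix, pow_succ, pow_zero, ← Matrix.ext_iff,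
      Fin.forall_fin_two, Fin.sum_univ_two, Matrix.mul_apply, Matrix.smul_apply, Matrix.add_apply,
      Matrix.sub_apply, Matrix.neg_apply, Matrix.one_apply, Matrix.zero_apply, Matrix.of_apply,
      Matrix.cons_val_zero, Matrix.cons_val_one, smul_eq_mul, mul_zero, zero_mul, add_zero,
      zero_add, mul_one, one_mul, neg_zero, sub_zero, zero_sub, neg_mul, mul_neg, neg_neg,
      one_ne_zero, zero_ne_one, if_true, if_false, true_and, and_true]
  case xsq => exact ⟨by linear_combination hβδ, by linear_combination hβδ⟩
  case axr => exact ⟨by linear_combination hβ - α * β * hξ, by ring⟩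
  case bxr => exact ⟨by linear_combination hbδ, by linear_combination -ξ * hbδ⟩
  case cxr =>
    rw [hα_inv]
    exact ⟨by linear_combination hδ, by linear_combination ξ * hδ⟩
  case dxr => exact ⟨by linear_combination hdβ - α⁻¹ * β * hξ, by ring⟩
  -- With the facts about `β` and `δ` in scope, the Gröbner basis computed by `grind` blows up.
  all_goals
    clear hβ hδ hβδ hbδ hdβ
    grind

theorem DAlg.exists_algHom_mkAlgHom_ι_eq {B : Type*} [Semiring B] [Algebra 𝕜 B] (f : DGen → B)
    (hf : ∀ ⦃y z⦄, DRel 𝕜 ξ ν y z → FreeAlgebra.lift 𝕜 f y = FreeAlgebra.lift 𝕜 f z) :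
    ∃ φ : DAlg 𝕜 ξ ν →ₐ[𝕜] B,
      ∀ t, φ (RingQuot.mkAlgHom 𝕜 (DRel 𝕜 ξ ν) (FreeAlgebra.ι 𝕜 t)) = f t :=
  ⟨RingQuot.liftAlgHom 𝕜 ⟨FreeAlgebra.lift 𝕜 f, hf⟩, fun t ↦ by
    rw [RingQuot.liftAlgHom_mkAlgHom_apply, FreeAlgebra.lift_ι_apply]⟩

theorem exists_vijOn (hξ : IsPrimitiveRoot ξ 4) (hν : ν ^ 2 = 2) (i j : ZMod 4) :
    ∃ ρ : DAlg 𝕜 ξ ν →ₐ[𝕜] Module.End 𝕜 (𝕜 × 𝕜), VijOn ρ i j (1, 0) (0, 1) := by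
  have h2 : (2 : 𝕜) ≠ 0 := two_ne_zero_of_isPrimitiveRoot_four hξ
  have hξ_sq : ξ ^ 2 = -1 := sq_eq_neg_one_of_isPrimitiveRoot_four hξ
  have hpow (n : ℕ) : (ξ ^ n) ^ 4 = 1 := by rw [pow_right_comm, hξ.pow_eq_one, one_pow]
  obtain ⟨α, hα⟩ : ∃ α, ξ ^ i.val = α := ⟨_, rfl⟩
  obtain ⟨γ, hγ⟩ : ∃ γ, ξ ^ j.val = γ := ⟨_, rfl⟩
  have hα4 : α ^ 4 = 1 := hα ▸ hpow _
  have hγ4 : γ ^ 4 = 1 := hγ ▸ hpow _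
  have hx_upper : 2 * (α * (ν * ξ / 2 * (α + α ^ 3 * γ))) = ν * ξ * (α ^ 2 + γ) := by
    field_simp
    linear_combination ν * ξ * γ * hα4
  have hx_sq : ν * ξ / 2 * (α + α ^ 3 * γ) * (ν * ξ * (α ^ 3 - α * γ)) = γ ^ 2 - 1 := by
    have hνξ : ν ^ 2 * ξ ^ 2 = -2 := by rw [hν, hξ_sq, mul_neg_one]
    field_simp
    linear_combination α ^ 2 * (1 + α ^ 2 * γ) * (α ^ 2 - γ) * hνξ -
      2 * (1 + α ^ 2 * γ - γ ^ 2) * hα4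
  obtain ⟨φ, hφ⟩ := DAlg.exists_algHom_mkAlgHom_ι_eq _ fun _ _ ↦
    lift_vijMatrix_eq_of_dRel hξ_sq hα4 hγ4 hx_upper rfl hx_sq
  refine ⟨(Matrix.toLinAlgEquiv (Module.Basis.finTwoProd 𝕜)).toAlgHom.comp φ, ?_⟩
  have h_neg_one : (-1 : 𝕜) ^ i.val = α ^ 2 := by rw [← hξ_sq, pow_right_comm, hα]
  have h_add_three : ξ ^ (i.val + 3) = -(ξ * α) := by
    rw [pow_add, hα]
    linear_combination α * ξ * hξ_sq
  have h_add_two : ξ ^ (j.val + 2) = -γ := by rw [pow_add, hγ, hξ_sq, mul_neg_one]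
  have toLin_apply (N : Matrix (Fin 2) (Fin 2) 𝕜) (v : 𝕜 × 𝕜) :
      Matrix.toLinAlgEquiv (Module.Basis.finTwoProd 𝕜) N v =
        Matrix.toLin (Module.Basis.finTwoProd 𝕜) (Module.Basis.finTwoProd 𝕜) N v := rfl
  simp [VijOn, gA, gB, gC, gD, gG, gX, hφ, vijMatrix, toLin_apply,
    h_neg_one, h_add_three, h_add_two, hα, hγ, pow_add, mul_comm 3, pow_mul]

theorem stmt_6_general (hξ : IsPrimitiveRoot ξ 4) (hν : ν ^ 2 = 2) {i j : ZMod 4}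
    (hij : 2 * i ≠ j) :
    ∃ ρ : DAlg 𝕜 ξ ν →ₐ[𝕜] Module.End 𝕜 (𝕜 × 𝕜),
      VijOn ρ i j (1, 0) (0, 1) ∧ DSimpleRep ρ := by
  obtain ⟨ρ, hρ⟩ := exists_vijOn hξ hν i j
  have hspan : span 𝕜 {((1 : 𝕜), (0 : 𝕜)), (0, 1)} = ⊤ := by
    simp [Submodule.eq_top_iff', Submodule.mem_span_pair]
  have hν0 : ν ≠ 0 := by
    rintro rfl
    exact two_ne_zero_of_isPrimitiveRoot_four hξ (by rw [← hν, zero_pow two_ne_zero])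
  exact ⟨ρ, hρ, hρ.dSimpleRep hspan hξ hν0 hij⟩

/-- For every pair `(i,j) ∈ Λ` (i.e. `2i ≠ j` in `ℤ/4`), the stated
formulas define a left `D`-module structure on the 2-dimensional space
`V_{i,j} = 𝕜e₁ ⊕ 𝕜e₂`, and `V_{i,j}` is a simple `D`-module. -/
theorem stmt_6 (𝕜 : Type) [Field 𝕜] [IsAlgClosed 𝕜] [CharZero 𝕜]
    (ξ ν : 𝕜) (hξ : IsPrimitiveRoot ξ 4) (hν : ν ^ 2 = 2)
    (i j : ZMod 4) (hij : 2 * i ≠ j) :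
    ∃ ρ : DAlg 𝕜 ξ ν →ₐ[𝕜] Module.End 𝕜 (𝕜 × 𝕜),
      VijOn ρ i j ((1 : 𝕜), (0 : 𝕜)) ((0 : 𝕜), (1 : 𝕜)) ∧ DSimpleRep ρ :=
  stmt_6_general hξ hν hij
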